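/- Let n > 3. The Lie algebra of derivations of the Poisson algebra P₁,₃ⁿ has dimension n+1, and the Lie algebra of derivations of the Poisson algebra P₁,₄ⁿ also has dimension n+1. -/

import Mathlib

open scoped BigOperators

/-- The bilinear map on `Fin n → ℂ` determined by structure constants `c`. -/
noncomputable def sb {n : ℕ} (c : Fin n → Fin n → Fin n → ℂ) :
    (Fin n → ℂ) →ₗ[ℂ] (Fin n → ℂ) →ₗ[ℂ] (Fin n → ℂ) :=
  LinearMap.mk₂ ℂ (fun x y k => ∑ a, ∑ b, c a b k * (x a * y b))
    (fun x x' y => by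
      funext k
      simp [add_mul, mul_add, Finset.sum_add_distrib])
    (fun r x y => by
      funext k
      simp only [Pi.smul_apply, smul_eq_mul, Finset.mul_sum]
      exact Finset.sum_congr rfl fun a _ => Finset.sum_congr rfl fun b _ => by ring)
    (fun x y y' => by
      funext k
      simp [mul_add, Finset.sum_add_distrib])
    (fun r x y => by
      funext k
      simp only [Pi.smul_apply, smul_eq_mul, Finset.mul_sum]
      exact Finset.sum_congr rfl fun a _ => Finset.sum_congr rfl fun b _ => by ring)

/-- The Lie algebra (here: submodule) of derivations of the Poisson algebra on
`Fin n → ℂ` with multiplication `m` and bracket `b`. -/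
noncomputable def derivs {n : ℕ}
    (m b : (Fin n → ℂ) →ₗ[ℂ] (Fin n → ℂ) →ₗ[ℂ] (Fin n → ℂ)) :
    Submodule ℂ ((Fin n → ℂ) →ₗ[ℂ] (Fin n → ℂ)) where
  carrier := {φ | (∀ x y, φ (m x y) = m (φ x) y + m x (φ y)) ∧
      (∀ x y, φ (b x y) = b (φ x) y + b x (φ y))}
  add_mem' := by
    rintro φ ψ ⟨h1, h2⟩ ⟨g1, g2⟩
    refine ⟨fun x y => ?_, fun x y => ?_⟩ <;>
      simp only [LinearMap.add_apply, map_add, h1, h2, g1, g2] <;> abel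
  zero_mem' := by
    refine ⟨fun x y => ?_, fun x y => ?_⟩ <;> simp
  smul_mem' := by
    rintro r φ ⟨h1, h2⟩
    refine ⟨fun x y => ?_, fun x y => ?_⟩ <;>
      simp only [LinearMap.smul_apply, map_smul, h1, h2, smul_add]

/-- Multiplication of `P₁,₃ⁿ`: `e_i · e_j = e_{i+j}` for `2 ≤ i+j ≤ n−1`,
`i,j ≤ n−1`; all other products of basis vectors are zero. -/
noncomputable def mu11 (n : ℕ) : (Fin n → ℂ) →ₗ[ℂ] (Fin n → ℂ) →ₗ[ℂ] (Fin n → ℂ) :=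
  sb (fun a b k => if (a : ℕ) + (b : ℕ) + 1 = (k : ℕ) ∧ (k : ℕ) + 2 ≤ n then 1 else 0)

/-- Multiplication of `P₁,₄ⁿ`: additionally `eₙ·eₙ = e_{n−1}`. -/
noncomputable def mu12 (n : ℕ) : (Fin n → ℂ) →ₗ[ℂ] (Fin n → ℂ) →ₗ[ℂ] (Fin n → ℂ) :=
  sb (fun a b k =>
    (if (a : ℕ) + (b : ℕ) + 1 = (k : ℕ) ∧ (k : ℕ) + 2 ≤ n then 1 else 0) +
    (if (a : ℕ) + 1 = n ∧ (b : ℕ) + 1 = n ∧ (k : ℕ) + 2 = n then 1 else 0))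

/-- The bracket of `P₁,₃ⁿ`: `{e₁,eₙ} = e_{n−1}`. -/
noncomputable def brB (n : ℕ) : (Fin n → ℂ) →ₗ[ℂ] (Fin n → ℂ) →ₗ[ℂ] (Fin n → ℂ) :=
  sb (fun a b k =>
    if (a : ℕ) = 0 ∧ (b : ℕ) + 1 = n ∧ (k : ℕ) + 2 = n then 1
    else if (a : ℕ) + 1 = n ∧ (b : ℕ) = 0 ∧ (k : ℕ) + 2 = n then -1 else 0)

/-!
Write `n = N + 3`. The first `n - 1` basis vectors of either algebra span `tℂ[t]/(tⁿ)`, with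
`e_i = t^i`, and `u = e_n` satisfies `t·u = 0`, `u·u = ε t^(n-1)` and `{t, u} = δ t^(n-1)`.
A derivation `φ` is determined by the vector `φ(t)` together with the coefficient of `t^(n-1)` in
`φ(u)`: the powers of `t` are generated by `t`, the relation `t·u = 0` fixes the lower coefficients
of `φ(u)`, and the coefficient of `u` in `φ(u)` is fixed by `u·u` or by `{t, u}`. Conversely these
`n + 1` parameters are free, because of the derivations `t^i ↦ i t^(i+l)` (corrected on `u` when
`l = 0`), `t ↦ u ↦ -ε t^(n-2)` and `u ↦ t^(n-1)`.
-/

section Coordinates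

variable {d : ℕ}

/-- The power `t^(i+1)` in the model `tℂ[t]/(t^(d+1)) ⊕ ℂ u` of `Fin (d + 1) → ℂ`, that is, the
`i`-th standard basis vector for `i < d` and `0` for `d ≤ i`. Letting the index run over `ℕ` makes
`t^(i+1) · t^(j+1) = t^(i+j+2)` hold without side conditions. -/
noncomputable def powVec (i : ℕ) : Fin (d + 1) → ℂ :=
  fun k => if (k : ℕ) = i ∧ i < d then 1 else 0

/-- The complementary basis vector `u` in the model `tℂ[t]/(t^(d+1)) ⊕ ℂ u` of
`Fin (d + 1) → ℂ`. -/
noncomputable def lastVec : Fin (d + 1) → ℂ :=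
  Pi.single (Fin.last d) 1

lemma powVec_eq_zero {i : ℕ} (h : d ≤ i) : (powVec i : Fin (d + 1) → ℂ) = 0 := by
  funext k
  simp [powVec, h]

lemma powVec_fin (i : Fin d) : (powVec i : Fin (d + 1) → ℂ) = Pi.single i.castSucc 1 := by
  funext k
  simp [powVec, Pi.single_apply, Fin.ext_iff]

lemma powVec_ne_zero {i : ℕ} (h : i < d) : (powVec i : Fin (d + 1) → ℂ) ≠ 0 := by
  rw [powVec_fin ⟨i, h⟩]
  simp

@[simp]
lemma lastVec_castSucc (k : Fin d) : lastVec k.castSucc = 0 := by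
  simp [lastVec]

@[simp]
lemma lastVec_last : lastVec (Fin.last d) = 1 := by
  simp [lastVec]

lemma sum_smul_powVec_add_smul_lastVec (x : Fin (d + 1) → ℂ) :
    ∑ l : Fin d, x l.castSucc • powVec l + x (Fin.last d) • lastVec = x := by
  simp_rw [powVec_fin, lastVec, ← Fin.sum_univ_castSucc fun l => x l • Pi.single l (1 : ℂ)]
  exact (pi_eq_sum_univ' x).symm

variable {M : Type*} [AddCommMonoid M] [Module ℂ M]

lemma linearMap_ext_powVec_lastVec {f g : (Fin (d + 1) → ℂ) →ₗ[ℂ] M}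
    (hpow : ∀ i, f (powVec i) = g (powVec i)) (hlast : f lastVec = g lastVec) : f = g := by
  refine LinearMap.ext fun x => ?_
  rw [← sum_smul_powVec_add_smul_lastVec x]
  simp only [map_add, map_sum, map_smul, hpow, hlast]

/-- The linear map with `t^(i+1) ↦ f i` for `i < d` and `u ↦ w`. -/
noncomputable def mapOfImages (d : ℕ) (f : ℕ → M) (w : M) : (Fin (d + 1) → ℂ) →ₗ[ℂ] M :=
  Fintype.linearCombination ℂ (Fin.snoc (α := fun _ => M) (fun i : Fin d => f i) w)

lemma mapOfImages_powVec {f : ℕ → M} (hf : ∀ i, d ≤ i → f i = 0) (w : M) (i : ℕ) :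
    mapOfImages d f w (powVec i) = f i := by
  rcases lt_or_ge i d with hi | hi
  · rw [powVec_fin ⟨i, hi⟩, mapOfImages, Fintype.linearCombination_apply_single, one_smul,
      Fin.snoc_castSucc]
  · rw [powVec_eq_zero hi, map_zero, hf i hi]

@[simp]
lemma mapOfImages_lastVec (f : ℕ → M) (w : M) : mapOfImages d f w lastVec = w := by
  rw [lastVec, mapOfImages, Fintype.linearCombination_apply_single, one_smul, Fin.snoc_last]

end Coordinates

section StructureConstants

lemma sb_single_single {n : ℕ} (c : Fin n → Fin n → Fin n → ℂ) (i j : Fin n) :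
    sb c (Pi.single i 1) (Pi.single j 1) = c i j := by
  funext k
  simp [sb, LinearMap.mk₂_apply, Pi.single_apply]

lemma sb_swap {n : ℕ} {c : Fin n → Fin n → Fin n → ℂ} {σ : ℂ}
    (hc : ∀ i j k, c i j k = σ * c j i k) (x y : Fin n → ℂ) : sb c x y = σ • sb c y x := by
  have h : sb c = σ • (sb c).flip := by
    refine LinearMap.ext_basis (Pi.basisFun ℂ _) (Pi.basisFun ℂ _) fun i j => ?_
    simp only [Pi.basisFun_apply, LinearMap.smul_apply, LinearMap.flip_apply, sb_single_single]
    exact funext (hc i j)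
  exact congrArg (fun B => B x y) h

variable {d : ℕ} {c : Fin (d + 1) → Fin (d + 1) → Fin (d + 1) → ℂ}

lemma sb_powVec_powVec {f : ℕ → ℕ → Fin (d + 1) → ℂ}
    (hc : ∀ (i j : Fin d) (k : Fin (d + 1)), c i.castSucc j.castSucc k = f i j k)
    (hf : ∀ i j, d ≤ i ∨ d ≤ j → f i j = 0) (i j : ℕ) :
    sb c (powVec i) (powVec j) = f i j := by
  rcases lt_or_ge i d with hi | hi
  · rcases lt_or_ge j d with hj | hj
    · rw [powVec_fin ⟨i, hi⟩, powVec_fin ⟨j, hj⟩, sb_single_single]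
      exact funext (hc ⟨i, hi⟩ ⟨j, hj⟩)
    · rw [powVec_eq_zero hj, map_zero, hf i j (.inr hj)]
  · rw [powVec_eq_zero hi, LinearMap.map_zero₂, hf i j (.inl hi)]

lemma sb_powVec_lastVec {f : ℕ → Fin (d + 1) → ℂ}
    (hc : ∀ (i : Fin d) (k : Fin (d + 1)), c i.castSucc (Fin.last d) k = f i k)
    (hf : ∀ i, d ≤ i → f i = 0) (i : ℕ) :
    sb c (powVec i) lastVec = f i := by
  rcases lt_or_ge i d with hi | hi
  · rw [powVec_fin ⟨i, hi⟩, lastVec, sb_single_single]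
    exact funext (hc ⟨i, hi⟩)
  · rw [powVec_eq_zero hi, LinearMap.map_zero₂, hf i hi]

end StructureConstants

/-- Poisson structures on `tℂ[t]/(t^(N+3)) ⊕ ℂ u` extending the product of `tℂ[t]/(t^(N+3))` by
`t·u = 0`, `u·u = ε t^(N+2)` and `{t, u} = δ t^(N+2)`. In dimension `n = N + 3`, the algebra
`P₁,₃ⁿ` has `(ε, δ) = (0, 1)` and `P₁,₄ⁿ` has `(ε, δ) = (1, 0)`. -/
structure IsNullFiliformPoisson (N : ℕ) (ε δ : ℂ)
    (m b : (Fin (N + 3) → ℂ) →ₗ[ℂ] (Fin (N + 3) → ℂ) →ₗ[ℂ] (Fin (N + 3) → ℂ)) : Prop where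
  mul_comm : ∀ x y, m x y = m y x
  mul_pow_pow : ∀ i j, m (powVec i) (powVec j) = powVec (i + j + 1)
  mul_pow_last : ∀ i, m (powVec i) lastVec = 0
  mul_last_last : m lastVec lastVec = ε • powVec (N + 1)
  bracket_skew : ∀ x y, b x y = -b y x
  bracket_pow_pow : ∀ i j, b (powVec i) (powVec j) = 0
  bracket_pow_last : ∀ i, b (powVec i) lastVec = if i = 0 then δ • powVec (N + 1) else 0

lemma isNullFiliformPoisson_mu11_brB (N : ℕ) :
    IsNullFiliformPoisson N 0 1 (mu11 (N + 3)) (brB (N + 3)) where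
  mul_comm x y := by
    rw [mu11, sb_swap (σ := 1) (fun i j k => by simp [add_comm]) x y, one_smul]
  mul_pow_pow := sb_powVec_powVec (f := fun i j => powVec (i + j + 1))
    (fun i j k => by grind [powVec]) (fun i j h => powVec_eq_zero (by omega))
  mul_pow_last := sb_powVec_lastVec (f := fun _ => 0)
    (fun i k => by simp only [Pi.zero_apply]; grind) (fun _ _ => rfl)
  mul_last_last := by
    funext k
    rw [mu11, lastVec, sb_single_single]
    simp only [zero_smul, Pi.zero_apply]
    grind
  bracket_skew x y := by
    rw [brB, sb_swap (σ := -1) (fun i j k => by grind) x y, neg_one_smul]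
  bracket_pow_pow := sb_powVec_powVec (f := fun _ _ => 0)
    (fun i j k => by simp only [Pi.zero_apply]; grind) (fun _ _ _ => rfl)
  bracket_pow_last := sb_powVec_lastVec
    (fun i k => by simp only [ite_apply, one_smul, powVec, Pi.zero_apply]; grind)
    (fun i h => if_neg (by omega))

lemma isNullFiliformPoisson_mu12_zero (N : ℕ) :
    IsNullFiliformPoisson N 1 0 (mu12 (N + 3)) 0 where
  mul_comm x y := by
    rw [mu12, sb_swap (σ := 1) (fun i j k => by grind) x y, one_smul]
  mul_pow_pow := sb_powVec_powVec (f := fun i j => powVec (i + j + 1))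
    (fun i j k => by grind [powVec]) (fun i j h => powVec_eq_zero (by omega))
  mul_pow_last := sb_powVec_lastVec (f := fun _ => 0)
    (fun i k => by simp only [Pi.zero_apply]; grind) (fun _ _ => rfl)
  mul_last_last := by
    funext k
    rw [mu12, lastVec, sb_single_single]
    simp only [one_smul, powVec]
    grind
  bracket_skew := by simp
  bracket_pow_pow := by simp
  bracket_pow_last := by simp

namespace IsNullFiliformPoisson

variable {N : ℕ} {ε δ : ℂ}
  {m b : (Fin (N + 3) → ℂ) →ₗ[ℂ] (Fin (N + 3) → ℂ) →ₗ[ℂ] (Fin (N + 3) → ℂ)}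

lemma mul_last_pow (P : IsNullFiliformPoisson N ε δ m b) (i : ℕ) : m lastVec (powVec i) = 0 := by
  rw [P.mul_comm, P.mul_pow_last]

lemma bracket_last_pow (P : IsNullFiliformPoisson N ε δ m b) (i : ℕ) :
    b lastVec (powVec i) = -if i = 0 then δ • powVec (N + 1) else 0 := by
  rw [P.bracket_skew, P.bracket_pow_last]

lemma bracket_last_last (P : IsNullFiliformPoisson N ε δ m b) : b lastVec lastVec = 0 :=
  self_eq_neg.1 (P.bracket_skew _ _)

end IsNullFiliformPoisson

lemma leibniz_of_powVec_lastVec {d : ℕ}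
    {B : (Fin (d + 1) → ℂ) →ₗ[ℂ] (Fin (d + 1) → ℂ) →ₗ[ℂ] (Fin (d + 1) → ℂ)} {σ : ℂ}
    (hB : ∀ x y, B x y = σ • B y x) {φ : (Fin (d + 1) → ℂ) →ₗ[ℂ] (Fin (d + 1) → ℂ)}
    (hpp : ∀ i j, φ (B (powVec i) (powVec j)) =
      B (φ (powVec i)) (powVec j) + B (powVec i) (φ (powVec j)))
    (hpl : ∀ i, φ (B (powVec i) lastVec) = B (φ (powVec i)) lastVec + B (powVec i) (φ lastVec))
    (hll : φ (B lastVec lastVec) = B (φ lastVec) lastVec + B lastVec (φ lastVec))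
    (x y : Fin (d + 1) → ℂ) :
    φ (B x y) = B (φ x) y + B x (φ y) := by
  have hlp (i : ℕ) : φ (B lastVec (powVec i)) =
      B (φ lastVec) (powVec i) + B lastVec (φ (powVec i)) := by
    rw [hB lastVec, hB (φ lastVec), hB lastVec (φ _), map_smul, hpl, smul_add]
    exact add_comm _ _
  have h : B.compr₂ φ = B.comp φ + B.compl₂ φ :=
    linearMap_ext_powVec_lastVec
      (fun i => linearMap_ext_powVec_lastVec (hpp i) (hpl i))
      (linearMap_ext_powVec_lastVec hlp hll)
  exact congrArg (fun f => f x y) h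

/-- The derivation `t^i ↦ i t^(i+l)`, that is `t^(l+1) d/dt`, of `tℂ[t]/(t^(N+3))`, extended by
`u ↦ κ u` for `l = 0` and by `u ↦ 0` otherwise. For `l = 0` it is the grading giving `u` the degree
`κ`, which has to satisfy `2 κ = N + 2` if `u·u ≠ 0` and `1 + κ = N + 2` if `{t, u} ≠ 0`. -/
noncomputable def shiftDer (N : ℕ) (κ : ℂ) (l : ℕ) : (Fin (N + 3) → ℂ) →ₗ[ℂ] (Fin (N + 3) → ℂ) :=
  mapOfImages (N + 2) (fun i => ((i : ℂ) + 1) • powVec (i + l)) (if l = 0 then κ • lastVec else 0)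

/-- The derivation `t ↦ u ↦ -ε t^(N+1)`, vanishing on the higher powers of `t`. -/
noncomputable def crossDer (N : ℕ) (ε : ℂ) : (Fin (N + 3) → ℂ) →ₗ[ℂ] (Fin (N + 3) → ℂ) :=
  mapOfImages (N + 2) (fun i => if i = 0 then lastVec else 0) (-(ε • powVec N))

/-- The derivation `u ↦ t^(N+2)`, vanishing on the powers of `t`. -/
noncomputable def socleDer (N : ℕ) : (Fin (N + 3) → ℂ) →ₗ[ℂ] (Fin (N + 3) → ℂ) :=
  mapOfImages (N + 2) (fun _ => 0) (powVec (N + 1))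

@[simp]
lemma shiftDer_powVec (N : ℕ) (κ : ℂ) (l i : ℕ) :
    shiftDer N κ l (powVec i) = ((i : ℂ) + 1) • powVec (i + l) :=
  mapOfImages_powVec (fun i hi => by rw [powVec_eq_zero (by omega), smul_zero]) _ i

@[simp]
lemma shiftDer_lastVec (N : ℕ) (κ : ℂ) (l : ℕ) :
    shiftDer N κ l lastVec = if l = 0 then κ • lastVec else 0 :=
  mapOfImages_lastVec _ _

@[simp]
lemma crossDer_powVec (N : ℕ) (ε : ℂ) (i : ℕ) :
    crossDer N ε (powVec i) = if i = 0 then lastVec else 0 :=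
  mapOfImages_powVec (fun i hi => if_neg (by omega)) _ i

@[simp]
lemma crossDer_lastVec (N : ℕ) (ε : ℂ) : crossDer N ε lastVec = -(ε • powVec N) :=
  mapOfImages_lastVec _ _

@[simp]
lemma socleDer_powVec (N i : ℕ) : socleDer N (powVec i) = 0 :=
  mapOfImages_powVec (fun _ _ => rfl) _ i

@[simp]
lemma socleDer_lastVec (N : ℕ) : socleDer N lastVec = powVec (N + 1) :=
  mapOfImages_lastVec _ _

namespace IsNullFiliformPoisson

variable {N : ℕ} {ε δ κ : ℂ}
  {m b : (Fin (N + 3) → ℂ) →ₗ[ℂ] (Fin (N + 3) → ℂ) →ₗ[ℂ] (Fin (N + 3) → ℂ)}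
  {φ : (Fin (N + 3) → ℂ) →ₗ[ℂ] (Fin (N + 3) → ℂ)}

lemma mem_derivs (P : IsNullFiliformPoisson N ε δ m b)
    (hmul_pp : ∀ i j, φ (powVec (i + j + 1)) =
      m (φ (powVec i)) (powVec j) + m (powVec i) (φ (powVec j)))
    (hmul_pl : ∀ i, m (φ (powVec i)) lastVec + m (powVec i) (φ lastVec) = 0)
    (hmul_ll : ε • φ (powVec (N + 1)) = (2 : ℂ) • m (φ lastVec) lastVec)
    (hbr_pp : ∀ i j, b (φ (powVec i)) (powVec j) + b (powVec i) (φ (powVec j)) = 0)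
    (hbr_pl : ∀ i, (if i = 0 then δ • φ (powVec (N + 1)) else 0) =
      b (φ (powVec i)) lastVec + b (powVec i) (φ lastVec)) :
    φ ∈ derivs m b := by
  refine ⟨leibniz_of_powVec_lastVec (σ := 1) (by simpa using P.mul_comm) ?_ ?_ ?_,
    leibniz_of_powVec_lastVec (σ := -1) (by simpa using P.bracket_skew) ?_ ?_ ?_⟩
  · simpa only [P.mul_pow_pow] using hmul_pp
  · intro i
    rw [P.mul_pow_last, map_zero, hmul_pl]
  · rw [P.mul_last_last, map_smul, hmul_ll, P.mul_comm lastVec, two_smul]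
  · intro i j
    rw [P.bracket_pow_pow, map_zero, hbr_pp]
  · intro i
    rw [P.bracket_pow_last, ← hbr_pl, apply_ite φ, map_smul, map_zero]
  · rw [P.bracket_last_last, map_zero, P.bracket_skew lastVec, add_neg_cancel]

lemma shiftDer_leibniz_pow_pow (P : IsNullFiliformPoisson N ε δ m b) (κ : ℂ) (l i j : ℕ) :
    shiftDer N κ l (powVec (i + j + 1)) =
      m (shiftDer N κ l (powVec i)) (powVec j) + m (powVec i) (shiftDer N κ l (powVec j)) := by
  have hleft : i + l + j + 1 = i + j + 1 + l := by omega
  have hright : i + (j + l) + 1 = i + j + 1 + l := by omega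
  simp only [shiftDer_powVec, map_smul, LinearMap.smul_apply, P.mul_pow_pow, hleft, hright,
    ← add_smul]
  congr 1
  push_cast
  ring

lemma shiftDer_mem_derivs (P : IsNullFiliformPoisson N ε δ m b)
    (hε : ε ≠ 0 → 2 * κ = N + 2) (hδ : δ ≠ 0 → 1 + κ = N + 2) (l : ℕ) :
    shiftDer N κ l ∈ derivs m b := by
  have hε' : ε * (2 * κ) = ε * (N + 2) := mul_eq_mul_left_iff.2 (or_iff_not_imp_right.2 hε)
  have hδ' : δ * (1 + κ) = δ * (N + 2) := mul_eq_mul_left_iff.2 (or_iff_not_imp_right.2 hδ)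
  have htop : l ≠ 0 → (powVec (N + 1 + l) : Fin (N + 3) → ℂ) = 0 := fun hl =>
    powVec_eq_zero (by omega)
  apply P.mem_derivs
  · exact P.shiftDer_leibniz_pow_pow κ l
  · intro i
    by_cases hl : l = 0 <;> simp [hl, P.mul_pow_last]
  · by_cases hl : l = 0
    · simp only [hl, shiftDer_powVec, shiftDer_lastVec, if_true, add_zero, map_smul,
        LinearMap.smul_apply, P.mul_last_last, smul_smul]
      congr 1
      push_cast
      linear_combination -hε'
    · simp [hl, htop hl]
  · simp [P.bracket_pow_pow]
  · intro i
    by_cases hl : l = 0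
    · by_cases hi : i = 0
      · simp only [hl, hi, shiftDer_powVec, shiftDer_lastVec, if_true, add_zero, map_smul,
          LinearMap.smul_apply, P.bracket_pow_last, smul_smul, ← add_smul]
        congr 1
        push_cast
        linear_combination -hδ'
      · simp [hl, hi, P.bracket_pow_last]
    · simp [hl, htop hl, P.bracket_pow_last]

lemma crossDer_mem_derivs (P : IsNullFiliformPoisson N ε δ m b) : crossDer N ε ∈ derivs m b := by
  apply P.mem_derivs
  · intro i j
    by_cases hi : i = 0 <;> by_cases hj : j = 0 <;> simp [hi, hj, P.mul_pow_last, P.mul_last_pow]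
  · intro i
    by_cases hi : i = 0
    · simp [hi, P.mul_pow_pow, P.mul_last_last]
    · simp [hi, P.mul_pow_pow, powVec_eq_zero (show N + 2 ≤ i + N + 1 by omega)]
  · simp [P.mul_pow_last]
  · intro i j
    by_cases hi : i = 0 <;> by_cases hj : j = 0 <;>
      simp [hi, hj, P.bracket_pow_last, P.bracket_last_pow]
  · intro i
    by_cases hi : i = 0 <;> simp [hi, P.bracket_pow_pow, P.bracket_last_last]

lemma socleDer_mem_derivs (P : IsNullFiliformPoisson N ε δ m b) : socleDer N ∈ derivs m b := by
  have htop (i : ℕ) : (powVec (i + (N + 1) + 1) : Fin (N + 3) → ℂ) = 0 := powVec_eq_zero (by omega)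
  apply P.mem_derivs <;> simp [P.mul_pow_pow, P.mul_pow_last, P.bracket_pow_pow, htop]

lemma mul_powVec_zero_apply (P : IsNullFiliformPoisson N ε δ m b) (x : Fin (N + 3) → ℂ)
    (k : Fin (N + 1)) :
    m (powVec 0) x k.succ.castSucc = x k.castSucc.castSucc := by
  have h : LinearMap.proj k.succ.castSucc ∘ₗ m (powVec 0) = LinearMap.proj k.castSucc.castSucc := by
    refine linearMap_ext_powVec_lastVec (fun i => ?_) ?_
    · simp only [LinearMap.comp_apply, LinearMap.proj_apply, P.mul_pow_pow, powVec,
        Fin.val_castSucc, Fin.val_succ]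
      grind
    · simp [P.mul_pow_last]
  exact LinearMap.congr_fun h x

lemma derivs_apply_powVec_eq_zero (P : IsNullFiliformPoisson N ε δ m b) (hφ : φ ∈ derivs m b)
    (h0 : φ (powVec 0) = 0) (i : ℕ) : φ (powVec i) = 0 := by
  induction i with
  | zero => exact h0
  | succ i ih =>
    simpa [P.mul_pow_pow, ih, h0] using hφ.1 (powVec i) (powVec 0)

lemma derivs_apply_lastVec_eq_smul (P : IsNullFiliformPoisson N ε δ m b) (hφ : φ ∈ derivs m b)
    (h0 : φ (powVec 0) = 0) (hsocle : φ lastVec (Fin.last (N + 1)).castSucc = 0) :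
    φ lastVec = φ lastVec (Fin.last (N + 2)) • lastVec := by
  have hmul : m (powVec 0) (φ lastVec) = 0 := by
    simpa [P.mul_pow_last, h0] using (hφ.1 (powVec 0) lastVec).symm
  funext k
  induction k using Fin.lastCases with
  | last => simp
  | cast k =>
    induction k using Fin.lastCases with
    | last => simpa using hsocle
    | cast k =>
      rw [← P.mul_powVec_zero_apply (φ _), hmul]
      simp

lemma eq_zero_of_mem_derivs (P : IsNullFiliformPoisson N ε δ m b) (hne : ε ≠ 0 ∨ δ ≠ 0)
    (hφ : φ ∈ derivs m b) (h0 : φ (powVec 0) = 0)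
    (hsocle : φ lastVec (Fin.last (N + 1)).castSucc = 0) : φ = 0 := by
  have hpow := P.derivs_apply_powVec_eq_zero hφ h0
  have hlast := P.derivs_apply_lastVec_eq_smul hφ h0 hsocle
  have htop : (powVec (N + 1) : Fin (N + 3) → ℂ) ≠ 0 := powVec_ne_zero (by omega)
  set c := φ lastVec (Fin.last (N + 2))
  have hcε : c * ε = 0 := by
    have h := hφ.1 lastVec lastVec
    rw [P.mul_last_last, hlast, map_smul, hpow, smul_zero, map_smul, map_smul, LinearMap.smul_apply,
      P.mul_last_last, ← two_smul ℂ, smul_smul, smul_smul] at h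
    simpa [htop] using h.symm
  have hcδ : c * δ = 0 := by
    have h := hφ.2 (powVec 0) lastVec
    rw [P.bracket_pow_last, if_pos rfl, hlast, map_smul, hpow, hpow, smul_zero, LinearMap.map_zero₂,
      zero_add, map_smul, P.bracket_pow_last, if_pos rfl, smul_smul] at h
    simpa [htop] using h.symm
  have hc0 : c = 0 := by
    rcases hne with h | h
    · exact (mul_eq_zero.1 hcε).resolve_right h
    · exact (mul_eq_zero.1 hcδ).resolve_right h
  refine linearMap_ext_powVec_lastVec hpow ?_
  rw [hlast, hc0, zero_smul, LinearMap.zero_apply]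

end IsNullFiliformPoisson

/-- The free parameters of a derivation `φ`: the vector `φ(t)` and the coefficient of `t^(N+2)` in
`φ(u)`. -/
noncomputable def derivsParams {N : ℕ}
    (m b : (Fin (N + 3) → ℂ) →ₗ[ℂ] (Fin (N + 3) → ℂ) →ₗ[ℂ] (Fin (N + 3) → ℂ)) :
    derivs m b →ₗ[ℂ] (Fin (N + 3) → ℂ) × ℂ :=
  ((LinearMap.applyₗ (powVec 0)).prod
    (LinearMap.proj (Fin.last (N + 1)).castSucc ∘ₗ LinearMap.applyₗ lastVec)) ∘ₗ
    (derivs m b).subtype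

namespace IsNullFiliformPoisson

variable {N : ℕ} {ε δ κ : ℂ}
  {m b : (Fin (N + 3) → ℂ) →ₗ[ℂ] (Fin (N + 3) → ℂ) →ₗ[ℂ] (Fin (N + 3) → ℂ)}

lemma derivsParams_injective (P : IsNullFiliformPoisson N ε δ m b) (hne : ε ≠ 0 ∨ δ ≠ 0) :
    Function.Injective (derivsParams m b) := by
  refine (injective_iff_map_eq_zero _).2 fun φ hφ => Subtype.ext ?_
  obtain ⟨h0, hsocle⟩ := Prod.ext_iff.1 hφ
  exact P.eq_zero_of_mem_derivs hne φ.2 h0 hsocle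

lemma derivsParams_surjective (P : IsNullFiliformPoisson N ε δ m b)
    (hε : ε ≠ 0 → 2 * κ = N + 2) (hδ : δ ≠ 0 → 1 + κ = N + 2) :
    Function.Surjective (derivsParams m b) := by
  rintro ⟨a, β⟩
  let shift (l : ℕ) : derivs m b := ⟨shiftDer N κ l, P.shiftDer_mem_derivs hε hδ l⟩
  let cross : derivs m b := ⟨crossDer N ε, P.crossDer_mem_derivs⟩
  let socle : derivs m b := ⟨socleDer N, P.socleDer_mem_derivs⟩
  have hshift (l : ℕ) : derivsParams m b (shift l) = (powVec l, 0) := by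
    by_cases hl : l = 0 <;> simp [derivsParams, shift, hl]
  have hcross : derivsParams m b cross = (lastVec, 0) := by
    simp [derivsParams, cross, powVec]
  have hsocle : derivsParams m b socle = (0, 1) := by
    simp [derivsParams, socle, powVec]
  refine ⟨∑ l : Fin (N + 2), a l.castSucc • shift l + a (Fin.last _) • cross + β • socle, ?_⟩
  simp only [map_add, map_sum, map_smul, hshift, hcross, hsocle]
  refine Prod.ext ?_ ?_
  · simpa [Prod.fst_sum] using sum_smul_powVec_add_smul_lastVec a
  · simp [Prod.snd_sum]

theorem finrank_derivs (P : IsNullFiliformPoisson N ε δ m b) (hne : ε ≠ 0 ∨ δ ≠ 0)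
    (hε : ε ≠ 0 → 2 * κ = N + 2) (hδ : δ ≠ 0 → 1 + κ = N + 2) :
    Module.finrank ℂ (derivs m b) = N + 4 := by
  have hbij : Function.Bijective (derivsParams m b) :=
    ⟨P.derivsParams_injective hne, P.derivsParams_surjective hε hδ⟩
  rw [(LinearEquiv.ofBijective _ hbij).finrank_eq]
  simp

end IsNullFiliformPoisson

theorem stmt13_general (n : ℕ) (hn : 3 ≤ n) :
    Module.finrank ℂ ↥(derivs (mu11 n) (brB n)) = n + 1 ∧
    Module.finrank ℂ ↥(derivs (mu12 n) 0) = n + 1 := by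
  obtain ⟨N, rfl⟩ := Nat.exists_eq_add_of_le' hn
  constructor
  · exact (isNullFiliformPoisson_mu11_brB N).finrank_derivs (κ := N + 1) (by simp) (by simp)
      (fun _ => by ring)
  · exact (isNullFiliformPoisson_mu12_zero N).finrank_derivs (κ := (N + 2) / 2) (by simp)
      (fun _ => by ring) (by simp)

/-- For n > 3, the Lie algebras of derivations of the Poisson algebras `P₁,₃ⁿ`
and `P₁,₄ⁿ` both have dimension `n + 1`. -/
theorem stmt13 (n : ℕ) (hn : 3 < n) :
    Module.finrank ℂ ↥(derivs (mu11 n) (brB n)) = n + 1 ∧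
    Module.finrank ℂ ↥(derivs (mu12 n) 0) = n + 1 :=
  stmt13_general n hn.le
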